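/- The group GL_n(Z) is finitely presented and contains only finitely many finite subgroups up to conjugacy. -/

import Mathlib

open Matrix

/-!
The group `GL_n(ℤ)` acts on the cone of positive definite quadratic forms, which is convex. Choosing
a shortest vector of a lattice and lifting a reduced basis of the projection orthogonal to it gives,
by induction on the rank, a basis that is almost orthogonal with a constant depending only on the
rank. The forms reduced with that constant are an open convex set whose translates cover the cone;
since entries of a base change between two reduced bases are bounded, it meets only finitely many
of its translates.

For an open connected set whose translates cover a simply connected space, the group is presented by
the elements returning the set to itself, with the products visible among them (Macbeath): they
define a cocycle on the cover, which is a coboundary because the associated covering space is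
trivial. So `GL_n(ℤ)` is finitely presented. A finite subgroup fixes the average of an orbit in the
cone; moving that fixed form into the reduced set conjugates the subgroup into the finite set of
returning elements.
-/

section Cocycle

variable {X : Type*} [TopologicalSpace X] {ι : Type*} {W : ι → Set X} {Γ : Type*} [Group Γ]
  {a : ι → ι → Γ}

/-- The principal `Γ`-bundle with discrete fibre glued from the trivial bundles over the members
of the open cover `W` along the cocycle `a`; `idx` picks a member of the cover around each
point. -/
def cocycleBundleCore [TopologicalSpace Γ] [DiscreteTopology Γ] (hW : ∀ i, IsOpen (W i))
    (idx : X → ι) (hidx : ∀ x, x ∈ W (idx x))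
    (ha : ∀ i j k, (W i ∩ W j ∩ W k).Nonempty → a i j * a j k = a i k) :
    FiberBundleCore ι X Γ where
  baseSet := W
  isOpen_baseSet := hW
  indexAt := idx
  mem_baseSet_at := hidx
  coordChange i j _ v := v * a i j
  coordChange_self i x hx v := by
    have hii : a i i * a i i = a i i := ha i i i ⟨x, ⟨hx, hx⟩, hx⟩
    rw [mul_eq_left.1 hii, mul_one]
  continuousOn_coordChange i j :=
    (continuous_of_discreteTopology (f := fun v : Γ ↦ v * a i j)).comp_continuousOn
      continuousOn_snd
  coordChange_comp i j k x hx v := by rw [mul_assoc, ha i j k ⟨x, hx⟩]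

theorem exists_continuousOn_coboundary [SimplyConnectedSpace X] [LocallyPathConnectedSpace X]
    [TopologicalSpace Γ] [DiscreteTopology Γ] (hW : ∀ i, IsOpen (W i)) (hcov : ⋃ i, W i = Set.univ)
    (ha : ∀ i j k, (W i ∩ W j ∩ W k).Nonempty → a i j * a j k = a i k) :
    ∃ f : ι → X → Γ, (∀ i, ContinuousOn (f i) (W i)) ∧
      ∀ i j, ∀ x ∈ W i ∩ W j, f j x = f i x * a i j := by
  choose idx hidx using Set.iUnion_eq_univ_iff.1 hcov
  let Z := cocycleBundleCore hW idx hidx ha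
  have hcovering : IsCoveringMap (Bundle.TotalSpace.proj : Bundle.TotalSpace Γ Z.Fiber → X) :=
    FiberBundle.isCoveringMap
  let x₀ : X := Classical.arbitrary X
  obtain ⟨s, ⟨-, hs⟩, -⟩ := hcovering.existsUnique_continuousMap_lifts (ContinuousMap.id X) x₀
    ⟨x₀, (1 : Γ)⟩ rfl
  have hproj (x : X) : (s x).proj = x := congrFun hs x
  refine ⟨fun i x ↦ (Z.localTriv i (s x)).2, fun i ↦ ?_, fun i j x hx ↦ ?_⟩
  · refine continuous_snd.comp_continuousOn
      ((Z.localTriv i).continuousOn.comp s.continuous.continuousOn fun x hx ↦ ?_)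
    rw [(Z.localTriv i).mem_source]
    change (s x).proj ∈ W i
    rwa [hproj]
  · let v : Γ := (s x).2
    change v * a (idx (s x).1) j = v * a (idx (s x).1) i * a i j
    rw [hproj, mul_assoc, ha _ i j ⟨x, ⟨hidx x, hx.1⟩, hx.2⟩]

theorem exists_coboundary [SimplyConnectedSpace X] [LocallyPathConnectedSpace X]
    (hW : ∀ i, IsOpen (W i)) (hcov : ⋃ i, W i = Set.univ) (hconn : ∀ i, IsPreconnected (W i))
    (ha : ∀ i j k, (W i ∩ W j ∩ W k).Nonempty → a i j * a j k = a i k) :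
    ∃ c : ι → Γ, ∀ i j, (W i ∩ W j).Nonempty → c j = c i * a i j := by
  let _ : TopologicalSpace Γ := ⊥
  have : DiscreteTopology Γ := ⟨rfl⟩
  obtain ⟨f, hf, hfa⟩ := exists_continuousOn_coboundary hW hcov ha
  have hconst (i : ι) : ∃ c, ∀ x ∈ W i, f i x = c := by
    obtain hempty | ⟨y, hy⟩ := (W i).eq_empty_or_nonempty
    · exact ⟨1, by simp [hempty]⟩
    · exact ⟨f i y, fun x hx ↦ (hconn i).constant (hf i) hx hy⟩
  choose c hc using hconst
  exact ⟨c, fun i j ⟨x, hx⟩ ↦ by rw [← hc i x hx.1, ← hc j x hx.2, hfa i j x hx]⟩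

end Cocycle

section PartialMul

variable {G : Type*} [Group G]

/-- The relations `s * t = st` between those elements `s`, `t` of `T` whose product lies in `T`. -/
def partialMulRels (T : Set G) : Set (FreeGroup T) :=
  Set.range fun p : {p : T × T // (p.1 * p.2 : G) ∈ T} ↦
    FreeGroup.of p.1.1 * FreeGroup.of p.1.2 * (FreeGroup.of ⟨_, p.2⟩)⁻¹

/-- The group generated by the set `T`, subject only to the products that can be read off
inside `T`. -/
abbrev PartialMulGroup (T : Set G) : Type _ := PresentedGroup (partialMulRels T)

/-- The homomorphism to the ambient group that extends the inclusion of `T`. -/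
def partialMulHom (T : Set G) : PartialMulGroup T →* G :=
  PresentedGroup.toGroup (f := ((↑) : T → G)) <| by
    rintro _ ⟨p, rfl⟩
    simp

theorem partialMulHom_of {T : Set G} (t : T) : partialMulHom T (.of t) = t :=
  PresentedGroup.toGroup.of _

theorem partialMulGroup_of_mul_of {T : Set G} {s t : T} (hst : (s * t : G) ∈ T) :
    (.of s * .of t : PartialMulGroup T) = .of ⟨s * t, hst⟩ := by
  have hrel : PresentedGroup.mk (partialMulRels T)
      (FreeGroup.of s * FreeGroup.of t * (FreeGroup.of ⟨_, hst⟩)⁻¹) = 1 :=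
    PresentedGroup.one_of_mem ⟨⟨(s, t), hst⟩, rfl⟩
  rwa [map_mul, map_mul, map_inv, mul_inv_eq_one] at hrel

theorem isFinitelyPresented_partialMulGroup {T : Set G} (hT : T.Finite) :
    Group.IsFinitelyPresented (PartialMulGroup T) := by
  have : Finite T := hT
  have : Finite (partialMulRels T) := Set.finite_range _
  infer_instance

theorem closure_le_range_partialMulHom (T : Set G) :
    Subgroup.closure T ≤ (partialMulHom T).range :=
  (Subgroup.closure_le _).2 fun t ht ↦ ⟨.of ⟨t, ht⟩, partialMulHom_of _⟩

theorem partialMulHom_injective_of_mul {T : Set G} (c : G → PartialMulGroup T)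
    (hc : ∀ (g : G) (t : T), c (g * t) = c g * .of t) :
    Function.Injective (partialMulHom T) := by
  have hcw (w : PartialMulGroup T) : ∀ g, c (g * partialMulHom T w) = c g * w := by
    have hw : w ∈ Subgroup.closure (Set.range (PresentedGroup.of (rels := partialMulRels T))) :=
      PresentedGroup.closure_range_of (partialMulRels T) ▸ Subgroup.mem_top w
    induction hw using Subgroup.closure_induction with
    | mem w hw =>
      obtain ⟨t, rfl⟩ := hw
      exact fun g ↦ by rw [partialMulHom_of, hc]
    | one => simp
    | mul w w' _ _ hw hw' => exact fun g ↦ by rw [map_mul, ← mul_assoc, hw', hw, mul_assoc]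
    | inv w _ hw => exact fun g ↦ by rw [eq_mul_inv_iff_mul_eq, ← hw, map_inv, inv_mul_cancel_right]
  rw [injective_iff_map_eq_one]
  intro w hw
  simpa [hw] using hcw w 1

end PartialMul

section Action

open scoped Pointwise

variable {G X : Type*} [Group G] [MulAction G X]

variable (G) in
/-- The elements of `G` that move `U` to a translate meeting `U`. -/
def returnSet (U : Set X) : Set G := {g | (U ∩ g • U).Nonempty}

theorem smul_inter_smul_nonempty_iff {U : Set X} {g h : G} :
    (g • U ∩ h • U).Nonempty ↔ g⁻¹ * h ∈ returnSet G U := by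
  rw [← Set.smul_set_nonempty (a := g⁻¹), Set.smul_set_inter, smul_smul, smul_smul,
    inv_mul_cancel, one_smul]
  rfl

section Macbeath

variable [TopologicalSpace X] [ContinuousConstSMul G X] {U : Set X}

theorem closure_returnSet_eq_top [ConnectedSpace X] (hU : IsOpen U)
    (hcov : ⋃ g : G, g • U = Set.univ) : Subgroup.closure (returnSet G U) = ⊤ := by
  set H := Subgroup.closure (returnSet G U)
  have mem_of_meet {g h : G} (hg : g ∈ H) (hgh : (g • U ∩ h • U).Nonempty) : h ∈ H := by
    rw [smul_inter_smul_nonempty_iff] at hgh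
    simpa using mul_mem hg (Subgroup.subset_closure hgh)
  have hUne : U.Nonempty := by
    by_contra! hempty
    exact Set.empty_ne_univ (α := X) (by simpa [hempty] using hcov)
  have hcompl : (⋃ g ∈ H, g • U)ᶜ = ⋃ g ∉ H, g • U := by
    ext x
    simp only [Set.mem_compl_iff, Set.mem_iUnion, not_exists]
    refine ⟨fun hx ↦ ?_, fun ⟨g, hg, hxg⟩ h hh hxh ↦ hg (mem_of_meet hh ⟨x, hxh, hxg⟩)⟩
    obtain ⟨g, hg⟩ := Set.iUnion_eq_univ_iff.1 hcov x
    exact ⟨g, fun hgH ↦ hx g hgH hg, hg⟩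
  have hclopen : IsClopen (⋃ g ∈ H, g • U) :=
    ⟨⟨hcompl ▸ isOpen_biUnion fun g _ ↦ hU.smul g⟩, isOpen_biUnion fun g _ ↦ hU.smul g⟩
  have huniv : ⋃ g ∈ H, g • U = Set.univ :=
    hclopen.eq_univ (Set.nonempty_biUnion.2 ⟨1, one_mem H, hUne.smul_set⟩)
  refine (Subgroup.eq_top_iff' H).2 fun g ↦ ?_
  obtain ⟨x, hx⟩ := hUne.smul_set (a := g)
  obtain ⟨h, hh, hxh⟩ := Set.mem_iUnion₂.1 (huniv ▸ Set.mem_univ x)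
  exact mem_of_meet hh ⟨x, hxh, hx⟩

theorem partialMulHom_returnSet_injective [SimplyConnectedSpace X] [LocallyPathConnectedSpace X]
    (hU : IsOpen U) (hconn : IsPreconnected U) (hcov : ⋃ g : G, g • U = Set.univ) :
    Function.Injective (partialMulHom (returnSet G U)) := by
  classical
  let a (g h : G) : PartialMulGroup (returnSet G U) :=
    if hgh : g⁻¹ * h ∈ returnSet G U then .of ⟨_, hgh⟩ else 1
  have ha_of {g h : G} (hgh : g⁻¹ * h ∈ returnSet G U) : a g h = .of ⟨_, hgh⟩ := dif_pos hgh
  have ha (g h k : G) (hghk : (g • U ∩ h • U ∩ k • U).Nonempty) : a g h * a h k = a g k := by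
    obtain ⟨x, ⟨hg, hh⟩, hk⟩ := hghk
    have hgk := smul_inter_smul_nonempty_iff.1 ⟨x, hg, hk⟩
    have hmul : g⁻¹ * h * (h⁻¹ * k) = g⁻¹ * k := by group
    rw [ha_of (smul_inter_smul_nonempty_iff.1 ⟨x, hg, hh⟩),
      ha_of (smul_inter_smul_nonempty_iff.1 ⟨x, hh, hk⟩), ha_of hgk,
      partialMulGroup_of_mul_of (hmul ▸ hgk)]
    congr
  obtain ⟨c, hc⟩ := exists_coboundary (fun g : G ↦ hU.smul g) hcov
    (fun g ↦ hconn.image _ (continuous_const_smul g).continuousOn) ha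
  refine partialMulHom_injective_of_mul c fun g t ↦ ?_
  have ht : g⁻¹ * (g * t) ∈ returnSet G U := by simp
  have ht_eq : (⟨_, ht⟩ : returnSet G U) = t := Subtype.ext (inv_mul_cancel_left g t.1)
  rw [hc g (g * t) (smul_inter_smul_nonempty_iff.2 ht), ha_of ht, ht_eq]

/-- Macbeath's theorem. -/
theorem isFinitelyPresented_of_finite_returnSet [SimplyConnectedSpace X]
    [LocallyPathConnectedSpace X] (hU : IsOpen U) (hconn : IsPreconnected U)
    (hcov : ⋃ g : G, g • U = Set.univ) (hfin : (returnSet G U).Finite) :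
    Group.IsFinitelyPresented G := by
  have := isFinitelyPresented_partialMulGroup hfin
  have hsurj : Function.Surjective (partialMulHom (returnSet G U)) := by
    rw [← MonoidHom.range_eq_top, ← top_le_iff, ← closure_returnSet_eq_top hU hcov]
    exact closure_le_range_partialMulHom _
  exact .equiv <| .ofBijective (partialMulHom (returnSet G U))
    ⟨partialMulHom_returnSet_injective hU hconn hcov, hsurj⟩

end Macbeath

theorem exists_map_conj_subset_returnSet {U : Set X} (hcov : ⋃ g : G, g • U = Set.univ)
    {H : Subgroup G} (hH : (MulAction.fixedPoints H X).Nonempty) :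
    ∃ g : G, (H.map (MulAut.conj g).toMonoidHom : Set G) ⊆ returnSet G U := by
  obtain ⟨x, hx⟩ := hH
  obtain ⟨g, hg⟩ := Set.iUnion_eq_univ_iff.1 hcov x
  rw [Set.mem_smul_set_iff_inv_smul_mem] at hg
  refine ⟨g⁻¹, ?_⟩
  rintro _ ⟨h, hh, rfl⟩
  have hfix : h • x = x := hx ⟨h, hh⟩
  refine ⟨g⁻¹ • x, hg, g⁻¹ • x, hg, ?_⟩
  simp [mul_smul, hfix]

theorem finite_quot_conj_of_finite_returnSet {U : Set X} (hcov : ⋃ g : G, g • U = Set.univ)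
    (hfin : (returnSet G U).Finite)
    (hfix : ∀ H : Subgroup G, Finite H → (MulAction.fixedPoints H X).Nonempty) :
    Finite (Quot fun H K : {H : Subgroup G // Finite H} ↦
      ∃ g : G, H.1.map (MulAut.conj g).toMonoidHom = K.1) := by
  have : Finite {K : Subgroup G // (K : Set G) ⊆ returnSet G U} :=
    (hfin.finite_subsets.preimage SetLike.coe_injective.injOn).to_subtype
  refine Finite.of_surjective (fun K : {K : Subgroup G // (K : Set G) ⊆ returnSet G U} ↦
    Quot.mk _ ⟨K.1, (hfin.subset K.2).to_subtype⟩) ?_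
  rintro ⟨H, hH⟩
  obtain ⟨g, hg⟩ := exists_map_conj_subset_returnSet hcov (hfix H hH)
  exact ⟨⟨_, hg⟩, (Quot.sound ⟨g, rfl⟩).symm⟩

end Action

section IsReducedForm

open scoped RealInnerProductSpace

variable {n : ℕ} {K : ℝ}

/-- `K`-reducedness of a symmetric matrix `Q`, a quantitative form of the conditions satisfied by
Korkine–Zolotareff reduced forms. For the Gram matrix of a basis `e` it says that the basis is
almost orthogonal, with `∑ y_k² ‖e_k‖² < K ‖∑ y_k e_k‖²` for `y ≠ 0`, that its lengths are almost
increasing, and that the later vectors are almost size-reduced against the earlier ones. Every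
condition is strict and convex in `Q`, so that the reduced forms are an open convex set. -/
structure IsReducedForm (K : ℝ) (Q : Matrix (Fin n) (Fin n) ℝ) : Prop where
  posDef_sub : (K • Q - diagonal Q.diag).PosDef
  diag_lt : ∀ i j, i < j → Q i i < K * Q j j
  abs_lt : ∀ i j, i < j → |Q i j| < K * Q i i

variable {E : Type*} [NormedAddCommGroup E] [InnerProductSpace ℝ E] {e : Fin n → E}

theorem posDef_smul_gram_sub_diagonal_iff :
    (K • gram ℝ e - diagonal (gram ℝ e).diag).PosDef ↔
      ∀ y : Fin n → ℝ, y ≠ 0 → ∑ k, y k ^ 2 * ‖e k‖ ^ 2 < K * ‖∑ k, y k • e k‖ ^ 2 := by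
  have hherm : (K • gram ℝ e - diagonal (gram ℝ e).diag).IsHermitian :=
    ((isHermitian_gram ℝ e).smul (.all K)).sub (isHermitian_diagonal _)
  have hform (y : Fin n → ℝ) : star y ⬝ᵥ (K • gram ℝ e - diagonal (gram ℝ e).diag) *ᵥ y =
      K * ‖∑ k, y k • e k‖ ^ 2 - ∑ k, y k ^ 2 * ‖e k‖ ^ 2 := by
    rw [sub_mulVec, smul_mulVec, dotProduct_sub, dotProduct_smul, star_dotProduct_gram_mulVec,
      real_inner_self_eq_norm_sq, smul_eq_mul]
    congr 1
    refine Finset.sum_congr rfl fun k _ ↦ ?_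
    rw [mulVec_diagonal, diag_apply, gram_apply, real_inner_self_eq_norm_sq, star_trivial]
    ring
  simp only [posDef_iff_dotProduct_mulVec, hform, sub_pos, hherm, true_and]

theorem isReducedForm_gram_iff :
    IsReducedForm K (gram ℝ e) ↔
      (∀ y : Fin n → ℝ, y ≠ 0 → ∑ k, y k ^ 2 * ‖e k‖ ^ 2 < K * ‖∑ k, y k • e k‖ ^ 2) ∧
      (∀ i j, i < j → ‖e i‖ ^ 2 < K * ‖e j‖ ^ 2) ∧
      ∀ i j, i < j → |⟪e i, e j⟫| < K * ‖e i‖ ^ 2 := by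
  rw [← posDef_smul_gram_sub_diagonal_iff]
  simp only [← real_inner_self_eq_norm_sq]
  exact ⟨fun h ↦ ⟨h.1, h.2, h.3⟩, fun h ↦ ⟨h.1, h.2.1, h.2.2⟩⟩

namespace IsReducedForm

theorem sum_sq_mul_norm_sq_le (he : IsReducedForm K (gram ℝ e)) (y : Fin n → ℝ) :
    ∑ k, y k ^ 2 * ‖e k‖ ^ 2 ≤ K * ‖∑ k, y k • e k‖ ^ 2 := by
  obtain rfl | hy := eq_or_ne y 0
  · simp
  · exact ((isReducedForm_gram_iff.1 he).1 y hy).le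

theorem norm_sq_lt (he : IsReducedForm K (gram ℝ e)) (i : Fin n) :
    ‖e i‖ ^ 2 < K * ‖e i‖ ^ 2 := by
  simpa [Pi.single_apply, ite_pow, ite_smul] using
    (isReducedForm_gram_iff.1 he).1 (Pi.single i 1) (by simp)

theorem ne_zero (he : IsReducedForm K (gram ℝ e)) (i : Fin n) : e i ≠ 0 := by
  intro h
  simpa [h] using he.norm_sq_lt i

theorem one_lt (he : IsReducedForm K (gram ℝ e)) (i : Fin n) : 1 < K :=
  lt_of_mul_lt_mul_right (by simpa using he.norm_sq_lt i) (sq_nonneg ‖e i‖)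

theorem norm_sq_le (he : IsReducedForm K (gram ℝ e)) {i j : Fin n} (hij : i ≤ j) :
    ‖e i‖ ^ 2 ≤ K * ‖e j‖ ^ 2 := by
  obtain rfl | hij := hij.eq_or_lt
  · exact (he.norm_sq_lt i).le
  · exact ((isReducedForm_gram_iff.1 he).2.1 i j hij).le

theorem abs_inner_le (he : IsReducedForm K (gram ℝ e)) (i j : Fin n) :
    |⟪e i, e j⟫| ≤ K * ‖e j‖ ^ 2 := by
  obtain hij | hji := le_or_gt i j
  · nlinarith [abs_real_inner_le_norm (e i) (e j), he.norm_sq_le hij, he.norm_sq_lt j,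
      sq_nonneg (‖e i‖ - ‖e j‖)]
  · rw [real_inner_comm]
    exact ((isReducedForm_gram_iff.1 he).2.2 j i hji).le

theorem comp_castSucc {e : Fin (n + 1) → E} (he : IsReducedForm K (gram ℝ e)) :
    IsReducedForm K (gram ℝ (e ∘ Fin.castSucc)) where
  posDef_sub := by
    convert he.posDef_sub.submatrix (Fin.castSucc_injective n)
    ext i j
    simp [diagonal_apply]
  diag_lt i j hij := he.diag_lt i.castSucc j.castSucc (by simpa)
  abs_lt i j hij := he.abs_lt i.castSucc j.castSucc (by simpa)

end IsReducedForm

theorem sq_sub_sum_le (s : ℝ) (f : Fin n → ℝ) :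
    (s - ∑ i, f i) ^ 2 ≤ (n + 1) * (s ^ 2 + ∑ i, f i ^ 2) := by
  simpa [Fin.sum_univ_succ, ← sub_eq_add_neg] using
    sq_sum_le_card_mul_sum_sq (s := Finset.univ) (f := Fin.cons s (-f))

section Shear

variable {v : E}

theorem norm_add_smul_sq {w : E} (hvw : ⟪v, w⟫ = 0) (s : ℝ) :
    ‖w + s • v‖ ^ 2 = ‖w‖ ^ 2 + s ^ 2 * ‖v‖ ^ 2 := by
  have hw : ⟪w, s • v⟫ = 0 := by rw [inner_smul_right, real_inner_comm, hvw, mul_zero]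
  rw [sq, norm_add_sq_eq_norm_sq_add_norm_sq_real hw, norm_smul, Real.norm_eq_abs, ← sq_abs s]
  ring

theorem norm_sq_le_of_norm_le_shear {w : E} {s : ℝ} (hvw : ⟪v, w⟫ = 0) (hs : |s| ≤ 1 / 2)
    (hmin : ‖v‖ ≤ ‖w + s • v‖) : ‖v‖ ^ 2 ≤ 4 / 3 * ‖w‖ ^ 2 := by
  have hs' : s ^ 2 ≤ 1 / 4 := by nlinarith [sq_abs s, abs_nonneg s]
  have hsq := pow_le_pow_left₀ (norm_nonneg v) hmin 2
  rw [norm_add_smul_sq hvw] at hsq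
  nlinarith [sq_nonneg ‖v‖]

theorem norm_shear_sq_le {w : E} {s : ℝ} (hvw : ⟪v, w⟫ = 0) (hs : |s| ≤ 1 / 2)
    (hmin : ‖v‖ ≤ ‖w + s • v‖) : ‖w + s • v‖ ^ 2 ≤ 4 / 3 * ‖w‖ ^ 2 := by
  have hs' : s ^ 2 ≤ 1 / 4 := by nlinarith [sq_abs s, abs_nonneg s]
  rw [norm_add_smul_sq hvw]
  nlinarith [norm_sq_le_of_norm_le_shear hvw hs hmin, sq_nonneg ‖v‖]

variable {w : Fin n → E} {t : Fin n → ℝ}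

theorem sum_sq_mul_norm_shear_sq_le (hvw : ∀ i, ⟪v, w i⟫ = 0) (ht : ∀ i, |t i| ≤ 1 / 2)
    (hmin : ∀ i, ‖v‖ ≤ ‖w i + t i • v‖) (z : Fin n → ℝ) :
    ∑ i, z i ^ 2 * ‖w i + t i • v‖ ^ 2 ≤ 4 / 3 * ∑ i, z i ^ 2 * ‖w i‖ ^ 2 := by
  rw [Finset.mul_sum]
  refine Finset.sum_le_sum fun i _ ↦ ?_
  nlinarith [norm_shear_sq_le (hvw i) (ht i) (hmin i), sq_nonneg (z i)]

theorem sum_sq_mul_norm_sq_le_shear (hvw : ∀ i, ⟪v, w i⟫ = 0) (ht : ∀ i, |t i| ≤ 1 / 2)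
    (hmin : ∀ i, ‖v‖ ≤ ‖w i + t i • v‖) (z : Fin n → ℝ) :
    (∑ i, (z i * t i) ^ 2) * ‖v‖ ^ 2 ≤ 1 / 3 * ∑ i, z i ^ 2 * ‖w i‖ ^ 2 := by
  rw [Finset.sum_mul, Finset.mul_sum]
  refine Finset.sum_le_sum fun i _ ↦ ?_
  have hti : t i ^ 2 ≤ 1 / 4 := by nlinarith [sq_abs (t i), abs_nonneg (t i), ht i]
  have hi : t i ^ 2 * ‖v‖ ^ 2 ≤ 1 / 3 * ‖w i‖ ^ 2 := by
    nlinarith [norm_sq_le_of_norm_le_shear (hvw i) (ht i) (hmin i), sq_nonneg ‖v‖]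
  nlinarith [sq_nonneg (z i)]

theorem sum_shear_sq_le (hvw : ∀ i, ⟪v, w i⟫ = 0) (ht : ∀ i, |t i| ≤ 1 / 2)
    (hmin : ∀ i, ‖v‖ ≤ ‖w i + t i • v‖) (hw : IsReducedForm K (gram ℝ w)) (hK : 1 ≤ K)
    (a : ℝ) (z : Fin n → ℝ) :
    a ^ 2 * ‖v‖ ^ 2 + ∑ i, z i ^ 2 * ‖w i + t i • v‖ ^ 2 ≤
      (n + 3) * K * ‖a • v + ∑ i, z i • (w i + t i • v)‖ ^ 2 := by
  set s := a + ∑ i, z i * t i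
  set x := ∑ i, z i • w i
  have hvx : ⟪v, x⟫ = 0 := by simp [x, inner_sum, inner_smul_right, hvw]
  have hnorm : ‖a • v + ∑ i, z i • (w i + t i • v)‖ ^ 2 = ‖x‖ ^ 2 + s ^ 2 * ‖v‖ ^ 2 := by
    rw [← norm_add_smul_sq hvx]
    simp only [x, s, smul_add, Finset.sum_add_distrib, add_smul, Finset.sum_smul, mul_smul]
    congr 2
    abel
  have hx : ∑ i, z i ^ 2 * ‖w i‖ ^ 2 ≤ K * ‖x‖ ^ 2 := hw.sum_sq_mul_norm_sq_le z
  have htail := sum_sq_mul_norm_shear_sq_le hvw ht hmin z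
  have hshift : (∑ i, (z i * t i) ^ 2) * ‖v‖ ^ 2 ≤ 1 / 3 * (K * ‖x‖ ^ 2) :=
    (sum_sq_mul_norm_sq_le_shear hvw ht hmin z).trans (by gcongr)
  have hhead : a ^ 2 * ‖v‖ ^ 2 ≤ (n + 1) * (s ^ 2 * ‖v‖ ^ 2 + 1 / 3 * (K * ‖x‖ ^ 2)) := calc
    _ ≤ (n + 1) * (s ^ 2 + ∑ i, (z i * t i) ^ 2) * ‖v‖ ^ 2 := by
      have ha : a = s - ∑ i, z i * t i := (add_sub_cancel_right _ _).symm
      gcongr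
      exact ha ▸ sq_sub_sum_le s _
    _ = (n + 1) * (s ^ 2 * ‖v‖ ^ 2 + (∑ i, (z i * t i) ^ 2) * ‖v‖ ^ 2) := by ring
    _ ≤ _ := by gcongr
  have hKs : s ^ 2 * ‖v‖ ^ 2 ≤ K * (s ^ 2 * ‖v‖ ^ 2) := le_mul_of_one_le_left (by positivity) hK
  have hn : (0 : ℝ) ≤ n := n.cast_nonneg
  have hKx : 0 ≤ K * ‖x‖ ^ 2 := by positivity
  rw [hnorm]
  nlinarith [mul_nonneg hn hKx, mul_le_mul_of_nonneg_left hKs hn]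

theorem sum_cons_shear_sq_lt (hv : v ≠ 0) (hvw : ∀ i, ⟪v, w i⟫ = 0) (ht : ∀ i, |t i| ≤ 1 / 2)
    (hmin : ∀ i, ‖v‖ ≤ ‖w i + t i • v‖) (hw : IsReducedForm K (gram ℝ w)) (hK : 1 ≤ K)
    {e : Fin (n + 1) → E} (he : e = Fin.cons v fun i ↦ w i + t i • v)
    {y : Fin (n + 1) → ℝ} (hy : y ≠ 0) :
    ∑ k, y k ^ 2 * ‖e k‖ ^ 2 < (n + 4) * K * ‖∑ k, y k • e k‖ ^ 2 := by
  have hle : ∑ k, y k ^ 2 * ‖e k‖ ^ 2 ≤ (n + 3) * K * ‖∑ k, y k • e k‖ ^ 2 := by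
    simpa [he, Fin.sum_univ_succ] using sum_shear_sq_le hvw ht hmin hw hK (y 0) fun i ↦ y i.succ
  have hpos : 0 < ∑ k, y k ^ 2 * ‖e k‖ ^ 2 := by
    obtain ⟨k, hk⟩ := Function.ne_iff.1 hy
    refine Finset.sum_pos' (fun _ _ ↦ by positivity) ⟨k, Finset.mem_univ k, ?_⟩
    have hek : 0 < ‖e k‖ := by
      rw [he]
      exact k.cases (norm_pos_iff.2 hv) fun i ↦ (norm_pos_iff.2 hv).trans_le (hmin i)
    exact mul_pos (sq_pos_of_ne_zero hk) (pow_pos hek 2)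
  have hx : 0 < ‖∑ k, y k • e k‖ ^ 2 :=
    pos_of_mul_pos_right (hpos.trans_le hle) (by positivity)
  nlinarith

theorem norm_shear_sq_le_mul (hvw : ∀ i, ⟪v, w i⟫ = 0) (ht : ∀ i, |t i| ≤ 1 / 2)
    (hmin : ∀ i, ‖v‖ ≤ ‖w i + t i • v‖) (hw : IsReducedForm K (gram ℝ w)) {i j : Fin n}
    (hij : i < j) : ‖w i + t i • v‖ ^ 2 ≤ 4 / 3 * K * ‖w j + t j • v‖ ^ 2 := calc
  _ ≤ 4 / 3 * ‖w i‖ ^ 2 := norm_shear_sq_le (hvw i) (ht i) (hmin i)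
  _ ≤ 4 / 3 * (K * ‖w j‖ ^ 2) := by gcongr; exact hw.norm_sq_le hij.le
  _ ≤ 4 / 3 * K * ‖w j + t j • v‖ ^ 2 := by
    have hK : 0 < K := one_pos.trans (hw.one_lt j)
    rw [norm_add_smul_sq (hvw j), ← mul_assoc]
    gcongr
    exact le_add_of_nonneg_right (by positivity)

theorem abs_inner_shear_le (hvw : ∀ i, ⟪v, w i⟫ = 0) (ht : ∀ i, |t i| ≤ 1 / 2)
    (hmin : ∀ i, ‖v‖ ≤ ‖w i + t i • v‖) (hw : IsReducedForm K (gram ℝ w)) {i j : Fin n}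
    (hij : i < j) :
    |⟪w i + t i • v, w j + t j • v⟫| ≤ (K + 1 / 4) * ‖w i + t i • v‖ ^ 2 := by
  have hinner : ⟪w i + t i • v, w j + t j • v⟫ = ⟪w i, w j⟫ + t i * t j * ‖v‖ ^ 2 := by
    rw [inner_add_left, inner_add_right, inner_add_right, real_inner_smul_left,
      real_inner_smul_left, real_inner_smul_right, real_inner_smul_right, hvw,
      real_inner_comm v (w i), hvw, real_inner_self_eq_norm_sq]
    ring
  have htt : |t i * t j| ≤ 1 / 4 := by
    rw [abs_mul]
    nlinarith [ht i, ht j, abs_nonneg (t i), abs_nonneg (t j)]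
  have hK : 0 < K := one_pos.trans (hw.one_lt i)
  calc |⟪w i + t i • v, w j + t j • v⟫|
    _ ≤ |⟪w i, w j⟫| + |t i * t j| * ‖v‖ ^ 2 := by
      rw [hinner, ← abs_of_nonneg (sq_nonneg ‖v‖), ← abs_mul, abs_of_nonneg (sq_nonneg ‖v‖)]
      exact abs_add_le _ _
    _ ≤ K * ‖w i‖ ^ 2 + 1 / 4 * ‖w i + t i • v‖ ^ 2 := by
      gcongr
      · exact ((isReducedForm_gram_iff.1 hw).2.2 i j hij).le
      · exact hmin i
    _ ≤ (K + 1 / 4) * ‖w i + t i • v‖ ^ 2 := by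
      have hle : ‖w i‖ ^ 2 ≤ ‖w i + t i • v‖ ^ 2 := by
        rw [norm_add_smul_sq (hvw i)]
        exact le_add_of_nonneg_right (by positivity)
      rw [add_mul]
      gcongr

theorem isReducedForm_gram_cons (hv : v ≠ 0) (hvw : ∀ i, ⟪v, w i⟫ = 0) (ht : ∀ i, |t i| ≤ 1 / 2)
    (hmin : ∀ i, ‖v‖ ≤ ‖w i + t i • v‖) (hw : IsReducedForm K (gram ℝ w)) (hK : 1 ≤ K) :
    IsReducedForm ((n + 4) * K)
      (gram ℝ (Fin.cons v fun i ↦ w i + t i • v : Fin (n + 1) → E)) := by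
  have hnK : 4 * K ≤ (n + 4) * K := by gcongr; simp
  have hv_pos : 0 < ‖v‖ := norm_pos_iff.2 hv
  have hu_pos (i : Fin n) : 0 < ‖w i + t i • v‖ := hv_pos.trans_le (hmin i)
  refine isReducedForm_gram_iff.2 ⟨fun y hy ↦ sum_cons_shear_sq_lt hv hvw ht hmin hw hK rfl hy,
    fun i j hij ↦ ?_, fun i j hij ↦ ?_⟩
  · obtain ⟨j, rfl⟩ := Fin.exists_succ_eq.2 (Fin.ne_zero_of_lt hij)
    have huj := pow_pos (hu_pos j) 2
    cases i using Fin.cases with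
    | zero =>
      simp only [Fin.cons_zero, Fin.cons_succ]
      nlinarith [pow_le_pow_left₀ hv_pos.le (hmin j) 2]
    | succ i =>
      simp only [Fin.cons_succ]
      nlinarith [norm_shear_sq_le_mul hvw ht hmin hw (Fin.succ_lt_succ_iff.1 hij)]
  · obtain ⟨j, rfl⟩ := Fin.exists_succ_eq.2 (Fin.ne_zero_of_lt hij)
    cases i using Fin.cases with
    | zero =>
      have hvu : ⟪v, w j + t j • v⟫ = t j * ‖v‖ ^ 2 := by
        rw [inner_add_right, hvw, zero_add, real_inner_smul_right, real_inner_self_eq_norm_sq]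
      simp only [Fin.cons_zero, Fin.cons_succ]
      rw [hvu, abs_mul, abs_of_pos (pow_pos hv_pos 2)]
      gcongr
      linarith [ht j]
    | succ i =>
      have hui := pow_pos (hu_pos i) 2
      simp only [Fin.cons_succ]
      nlinarith [abs_inner_shear_le hvw ht hmin hw (Fin.succ_lt_succ_iff.1 hij)]

end Shear

end IsReducedForm

section Reduction

open scoped RealInnerProductSpace Nat

variable {E : Type*} [NormedAddCommGroup E] {L : Submodule ℤ E}

theorem exists_shortest_ne_zero (hL : L ≠ ⊥) (hfin : ∀ R : ℝ, {x ∈ L | ‖x‖ ≤ R}.Finite) :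
    ∃ v ∈ L, v ≠ 0 ∧ ∀ x ∈ L, x ≠ 0 → ‖v‖ ≤ ‖x‖ := by
  obtain ⟨x₀, hx₀, hne⟩ := L.ne_bot_iff.1 hL
  obtain ⟨v, ⟨⟨hv, hvx₀⟩, hv0⟩, hmin⟩ := Set.exists_min_image
    ({x ∈ L | ‖x‖ ≤ ‖x₀‖} \ {0}) norm (hfin ‖x₀‖).sdiff ⟨x₀, ⟨hx₀, le_rfl⟩, hne⟩
  refine ⟨v, hv, hv0, fun x hx hx0 ↦ ?_⟩
  obtain hle | hlt := le_or_gt ‖x‖ ‖x₀‖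
  · exact hmin x ⟨⟨hx, hle⟩, hx0⟩
  · exact hvx₀.trans hlt.le

variable [InnerProductSpace ℝ E] {v : E}

/-- The orthogonal projection along `v`, as a map of abelian groups: its restriction to a lattice
containing `v` is the projection used in Korkine–Zolotareff reduction. -/
noncomputable def projAlong (v : E) : E →ₗ[ℤ] E :=
  ((ℝ ∙ v)ᗮ.starProjection : E →ₗ[ℝ] E).restrictScalars ℤ

theorem projAlong_eq_sub (v x : E) : projAlong v x = x - (⟪v, x⟫ / ‖v‖ ^ 2) • v := by
  simp [projAlong, Submodule.starProjection_orthogonal_val, Submodule.starProjection_singleton]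

theorem inner_projAlong (v x : E) : ⟪v, projAlong v x⟫ = 0 :=
  Submodule.mem_orthogonal_singleton_iff_inner_right.1
    (Submodule.starProjection_apply_mem (ℝ ∙ v)ᗮ x)

theorem projAlong_smul_self (v : E) (s : ℝ) : projAlong v (s • v) = 0 :=
  (map_smul (ℝ ∙ v)ᗮ.starProjection s v).trans <| by
    rw [Submodule.starProjection_orthogonalComplement_singleton_eq_zero, smul_zero]

theorem projAlong_add_smul {w : E} (hvw : ⟪v, w⟫ = 0) (s : ℝ) : projAlong v (w + s • v) = w := by
  rw [map_add, projAlong_smul_self, add_zero, projAlong_eq_sub, hvw, zero_div, zero_smul, sub_zero]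

theorem exists_add_smul_mem_of_mem_map_projAlong (hv : v ∈ L) {w : E}
    (hw : w ∈ L.map (projAlong v)) : ∃ t : ℝ, |t| ≤ 1 / 2 ∧ w + t • v ∈ L := by
  obtain ⟨x, hx, rfl⟩ := hw
  set c := ⟪v, x⟫ / ‖v‖ ^ 2
  refine ⟨c - round c, abs_sub_round c, ?_⟩
  have hround : projAlong v x + (c - round c) • v = x - round c • v := by
    rw [projAlong_eq_sub, sub_smul, Int.cast_smul_eq_zsmul]
    abel
  exact hround ▸ sub_mem hx (L.smul_mem _ hv)

theorem inf_ker_projAlong_eq_span (hv : v ∈ L) (hv0 : v ≠ 0)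
    (hmin : ∀ x ∈ L, x ≠ 0 → ‖v‖ ≤ ‖x‖) : L ⊓ LinearMap.ker (projAlong v) = ℤ ∙ v := by
  refine le_antisymm ?_ ?_
  · rintro x ⟨hx, hPx⟩
    set c := ⟪v, x⟫ / ‖v‖ ^ 2
    have hxc : x = c • v := sub_eq_zero.1 (projAlong_eq_sub v x ▸ hPx)
    have hdiff : x - round c • v = (c - round c) • v := by
      rw [sub_smul, Int.cast_smul_eq_zsmul, ← hxc]
    have hzero : x - round c • v = 0 := by
      by_contra hne
      have hle := hmin _ (sub_mem hx (L.smul_mem _ hv)) hne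
      rw [hdiff, norm_smul, Real.norm_eq_abs] at hle
      nlinarith [abs_sub_round c, norm_pos_iff.2 hv0]
    exact Submodule.mem_span_singleton.2 ⟨round c, (sub_eq_zero.1 hzero).symm⟩
  · rw [Submodule.span_singleton_le_iff_mem]
    exact ⟨hv, by simpa using projAlong_smul_self v 1⟩

theorem finite_map_projAlong (hv : v ∈ L) (hfin : ∀ R : ℝ, {x ∈ L | ‖x‖ ≤ R}.Finite) (R : ℝ) :
    {x ∈ L.map (projAlong v) | ‖x‖ ≤ R}.Finite := by
  refine ((hfin (R + ‖v‖)).image (projAlong v)).subset fun w ⟨hw, hwR⟩ ↦ ?_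
  obtain ⟨t, ht, hmem⟩ := exists_add_smul_mem_of_mem_map_projAlong hv hw
  have hvw : ⟪v, w⟫ = 0 := by
    obtain ⟨x, -, rfl⟩ := hw
    exact inner_projAlong v x
  refine ⟨w + t • v, ⟨hmem, ?_⟩, projAlong_add_smul hvw t⟩
  calc ‖w + t • v‖ ≤ ‖w‖ + |t| * ‖v‖ := by
        simpa only [norm_smul, Real.norm_eq_abs] using norm_add_le w (t • v)
    _ ≤ R + ‖v‖ := by nlinarith [norm_nonneg v]

theorem finrank_map_projAlong [Module.Finite ℤ L] (hv : v ∈ L) (hv0 : v ≠ 0)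
    (hmin : ∀ x ∈ L, x ≠ 0 → ‖v‖ ≤ ‖x‖) :
    Module.finrank ℤ (L.map (projAlong v)) + 1 = Module.finrank ℤ L := by
  set f := (projAlong v).domRestrict L
  have hrange : LinearMap.range f = L.map (projAlong v) := LinearMap.range_domRestrict L _
  have hker : (LinearMap.ker f).map L.subtype = ℤ ∙ v := by
    rw [← inf_ker_projAlong_eq_span hv hv0 hmin, ← Submodule.map_comap_subtype]
    rfl
  have : Module.IsTorsionFree ℤ E := .trans_faithfulSMul ℤ ℝ E
  have hker_rank : Module.finrank ℤ (LinearMap.ker f) = 1 := by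
    rw [← Submodule.finrank_map_subtype_eq, hker,
      ← (LinearEquiv.toSpanNonzeroSingleton ℤ E v hv0).finrank_eq, Module.finrank_self]
  rw [← hrange, ← f.quotKerEquivRange.finrank_eq, ← hker_rank,
    Submodule.finrank_quotient_add_finrank]

theorem span_range_cons_eq_of_map_projAlong {n : ℕ} {u : Fin n → E} (hv : v ∈ L) (hv0 : v ≠ 0)
    (hmin : ∀ x ∈ L, x ≠ 0 → ‖v‖ ≤ ‖x‖) (hu : ∀ i, u i ∈ L)
    (hspan : Submodule.span ℤ (Set.range fun i ↦ projAlong v (u i)) = L.map (projAlong v)) :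
    Submodule.span ℤ (Set.range (Fin.cons v u : Fin (n + 1) → E)) = L := by
  set S := Submodule.span ℤ (Set.range u)
  have hSL : S ≤ L := Submodule.span_le.2 (Set.range_subset_iff.2 hu)
  have hLS : L ≤ S ⊔ LinearMap.ker (projAlong v) := by
    rw [← LinearMap.map_le_map_iff, ← hspan, Submodule.map_span, ← Set.range_comp]
    rfl
  rw [Fin.range_cons, Submodule.span_insert, ← inf_ker_projAlong_eq_span hv hv0 hmin, sup_comm,
    inf_comm, ← sup_inf_assoc_of_le _ hSL, inf_eq_right.2 hLS]

theorem exists_isReducedForm_gram_span_eq (n : ℕ) :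
    ∀ (L : Submodule ℤ E) [Module.Finite ℤ L], Module.finrank ℤ L = n →
      (∀ R : ℝ, {x ∈ L | ‖x‖ ≤ R}.Finite) →
      ∃ e : Fin n → E, Submodule.span ℤ (Set.range e) = L ∧
        IsReducedForm ((n + 3)! : ℝ) (gram ℝ e) := by
  induction n with
  | zero =>
    intro L _ hrank _
    have : Module.IsTorsionFree ℤ E := .trans_faithfulSMul ℤ ℝ E
    refine ⟨Fin.elim0, ?_, isReducedForm_gram_iff.2
      ⟨fun y hy ↦ ?_, fun i ↦ i.elim0, fun i ↦ i.elim0⟩⟩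
    · simpa [eq_comm] using Submodule.finrank_eq_zero.1 hrank
    · exact absurd (Subsingleton.elim y 0) hy
  | succ n ih =>
    intro L _ hrank hfin
    have hL : L ≠ ⊥ := by
      rintro rfl
      simp at hrank
    obtain ⟨v, hv, hv0, hmin⟩ := exists_shortest_ne_zero hL hfin
    obtain ⟨w, hw_span, hw⟩ := ih (L.map (projAlong v))
      (by have := finrank_map_projAlong hv hv0 hmin; omega) (finite_map_projAlong hv hfin)
    have hw_mem (i : Fin n) : w i ∈ L.map (projAlong v) :=
      hw_span ▸ Submodule.subset_span (Set.mem_range_self i)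
    have hvw (i : Fin n) : ⟪v, w i⟫ = 0 := by
      obtain ⟨x, -, hx⟩ := hw_mem i
      exact hx ▸ inner_projAlong v x
    choose t ht hu using fun i ↦ exists_add_smul_mem_of_mem_map_projAlong hv (hw_mem i)
    have hproj (i : Fin n) : projAlong v (w i + t i • v) = w i := projAlong_add_smul (hvw i) (t i)
    have hu0 (i : Fin n) : w i + t i • v ≠ 0 := fun h ↦
      hw.ne_zero i (by rw [← hproj i, h, map_zero])
    refine ⟨Fin.cons v fun i ↦ w i + t i • v,
      span_range_cons_eq_of_map_projAlong hv hv0 hmin hu (by simpa only [hproj] using hw_span), ?_⟩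
    convert isReducedForm_gram_cons hv0 hvw ht (fun i ↦ hmin _ (hu i) (hu0 i)) hw
      (mod_cast Nat.one_le_iff_ne_zero.2 (Nat.factorial_ne_zero _)) using 1
    rw [Nat.add_right_comm, Nat.factorial_succ]
    push_cast
    ring

end Reduction

section Finiteness

open scoped RealInnerProductSpace

variable {n : ℕ} {K C : ℝ} {E : Type*} [NormedAddCommGroup E] [InnerProductSpace ℝ E]

theorem IsReducedForm.abs_inner_sum_intCast_le {b : Fin n → E} (hb : IsReducedForm K (gram ℝ b))
    (h : Fin n → ℤ) (i : Fin n) :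
    |⟪b i, ∑ j, (h j : ℝ) • b j⟫| ≤ K ^ 2 * ‖∑ j, (h j : ℝ) • b j‖ ^ 2 := by
  have hK : 0 < K := one_pos.trans (hb.one_lt i)
  have habs (m : ℤ) : |(m : ℝ)| ≤ (m : ℝ) ^ 2 := by
    rw [← Int.cast_abs, Int.abs_eq_natAbs]
    exact_mod_cast Int.natAbs_le_self_sq m
  calc |⟪b i, ∑ j, (h j : ℝ) • b j⟫|
    _ ≤ ∑ j, |(h j : ℝ)| * |⟪b i, b j⟫| := by
      simp only [inner_sum, real_inner_smul_right, ← abs_mul]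
      exact Finset.abs_sum_le_sum_abs _ _
    _ ≤ ∑ j, (h j : ℝ) ^ 2 * (K * ‖b j‖ ^ 2) := by
      gcongr with j
      · exact habs (h j)
      · exact hb.abs_inner_le i j
    _ = K * ∑ j, (h j : ℝ) ^ 2 * ‖b j‖ ^ 2 := by
      rw [Finset.mul_sum]
      exact Finset.sum_congr rfl fun j _ ↦ by ring
    _ ≤ K * (K * ‖∑ j, (h j : ℝ) • b j‖ ^ 2) := by gcongr; exact hb.sum_sq_mul_norm_sq_le _
    _ = K ^ 2 * ‖∑ j, (h j : ℝ) • b j‖ ^ 2 := by ring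

theorem IsReducedForm.norm_sq_sum_smul_le {e : Fin (n + 1) → E} (he : IsReducedForm K (gram ℝ e))
    {y : Fin (n + 1) → ℝ} (hy : ∀ l, |⟪e l, ∑ k, y k • e k⟫| ≤ C * ‖e l‖ ^ 2) :
    ‖∑ k, y k • e k‖ ^ 2 ≤ K * C ^ 2 * ∑ k, ‖e k‖ ^ 2 := by
  have hK : 0 < K := one_pos.trans (he.one_lt 0)
  set x := ∑ k, y k • e k with hx
  have hterm (k : Fin (n + 1)) :
      K * (y k * ⟪e k, x⟫) ≤ (y k ^ 2 * ‖e k‖ ^ 2 + K ^ 2 * C ^ 2 * ‖e k‖ ^ 2) / 2 := by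
    have hyk : y k * ⟪e k, x⟫ ≤ |y k| * (C * ‖e k‖ ^ 2) := by
      refine (le_abs_self _).trans (abs_mul (y k) _ ▸ ?_)
      gcongr
      exact hy k
    nlinarith [mul_nonneg (sq_nonneg (|y k| - K * C)) (sq_nonneg ‖e k‖), sq_abs (y k)]
  have hexpand : K * ‖x‖ ^ 2 = ∑ k, K * (y k * ⟪e k, x⟫) := by
    rw [← real_inner_self_eq_norm_sq, ← Finset.mul_sum]
    nth_rw 1 [hx]
    simp only [sum_inner, real_inner_smul_left]
  have hsum : K * ‖x‖ ^ 2 ≤ (K * ‖x‖ ^ 2 + K ^ 2 * C ^ 2 * ∑ k, ‖e k‖ ^ 2) / 2 := calc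
    _ ≤ _ := hexpand.trans_le (Finset.sum_le_sum fun k _ ↦ hterm k)
    _ = (∑ k, y k ^ 2 * ‖e k‖ ^ 2 + K ^ 2 * C ^ 2 * ∑ k, ‖e k‖ ^ 2) / 2 := by
      rw [← Finset.sum_div, Finset.sum_add_distrib, Finset.mul_sum]
    _ ≤ _ := by gcongr; exact he.sum_sq_mul_norm_sq_le y
  refine le_of_mul_le_mul_left ?_ hK
  linarith

theorem IsReducedForm.abs_coord_last_le {e : Fin (n + 1) → E} (he : IsReducedForm K (gram ℝ e))
    {y : Fin (n + 1) → ℝ} (hy : ∀ l, |⟪e l, ∑ k, y k • e k⟫| ≤ C * ‖e l‖ ^ 2) :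
    |y (Fin.last n)| ≤ √((n + 1) * C ^ 2 * K ^ 3) := by
  have hK : 0 < K := one_pos.trans (he.one_lt 0)
  have hlast : 0 < ‖e (Fin.last n)‖ ^ 2 := pow_pos (norm_pos_iff.2 (he.ne_zero _)) 2
  refine Real.abs_le_sqrt (le_of_mul_le_mul_right ?_ hlast)
  calc y (Fin.last n) ^ 2 * ‖e (Fin.last n)‖ ^ 2
    _ ≤ ∑ k, y k ^ 2 * ‖e k‖ ^ 2 :=
      Finset.single_le_sum (f := fun k ↦ y k ^ 2 * ‖e k‖ ^ 2) (fun _ _ ↦ by positivity)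
        (Finset.mem_univ _)
    _ ≤ K * ‖∑ k, y k • e k‖ ^ 2 := he.sum_sq_mul_norm_sq_le y
    _ ≤ K * (K * C ^ 2 * ∑ k, ‖e k‖ ^ 2) := by gcongr; exact he.norm_sq_sum_smul_le hy
    _ ≤ K * (K * C ^ 2 * ∑ _k : Fin (n + 1), K * ‖e (Fin.last n)‖ ^ 2) := by
      gcongr with k
      exact he.norm_sq_le k.le_last
    _ = (n + 1) * C ^ 2 * K ^ 3 * ‖e (Fin.last n)‖ ^ 2 := by
      rw [Finset.sum_const, Finset.card_univ, Fintype.card_fin, nsmul_eq_mul]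
      push_cast
      ring

theorem exists_abs_coord_le_of_isReducedForm (n : ℕ) (K C : ℝ) :
    ∃ B : ℝ, ∀ (e : Fin n → E) (y : Fin n → ℝ), IsReducedForm K (gram ℝ e) →
      (∀ l, |⟪e l, ∑ k, y k • e k⟫| ≤ C * ‖e l‖ ^ 2) → ∀ k, |y k| ≤ B := by
  induction n generalizing C with
  | zero => exact ⟨0, fun _ _ _ _ k ↦ k.elim0⟩
  | succ n ih =>
    set B₀ := √((n + 1) * C ^ 2 * K ^ 3)
    obtain ⟨B, hB⟩ := ih (C + B₀ * K)
    refine ⟨max B B₀, fun e y he hy k ↦ ?_⟩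
    have hlast : |y (Fin.last n)| ≤ B₀ := he.abs_coord_last_le hy
    cases k using Fin.lastCases with
    | last => exact le_max_of_le_right hlast
    | cast k =>
      refine le_max_of_le_left (hB _ (y ∘ Fin.castSucc) he.comp_castSucc (fun l ↦ ?_) k)
      have hsum : ∑ k : Fin n, y k.castSucc • e k.castSucc =
          ∑ k, y k • e k - y (Fin.last n) • e (Fin.last n) := by
        rw [Fin.sum_univ_castSucc, add_sub_cancel_right]
      simp only [Function.comp_apply]
      calc |⟪e l.castSucc, ∑ k : Fin n, y k.castSucc • e k.castSucc⟫|
        _ ≤ |⟪e l.castSucc, ∑ k, y k • e k⟫| +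
            |y (Fin.last n)| * |⟪e (Fin.last n), e l.castSucc⟫| := by
          rw [hsum, inner_sub_right, real_inner_smul_right,
            real_inner_comm (e l.castSucc), ← abs_mul]
          exact abs_sub _ _
        _ ≤ C * ‖e l.castSucc‖ ^ 2 + B₀ * (K * ‖e l.castSucc‖ ^ 2) := by
          gcongr
          · exact hy _
          · exact he.abs_inner_le _ _
        _ = (C + B₀ * K) * ‖e l.castSucc‖ ^ 2 := by ring

theorem finite_intMatrix_abs_le {m n : Type*} [Finite m] [Finite n] (B : ℝ) :
    {A : Matrix m n ℤ | ∀ i j, |(A i j : ℝ)| ≤ B}.Finite := by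
  have hint : {k : ℤ | |(k : ℝ)| ≤ B}.Finite :=
    (Set.finite_Icc ⌈-B⌉ ⌊B⌋).subset fun k hk ↦
      ⟨Int.ceil_le.2 (abs_le.1 hk).1, Int.le_floor.2 (abs_le.1 hk).2⟩
  exact Set.Finite.pi' fun _ ↦ Set.Finite.pi' fun _ ↦ hint

end Finiteness

section PosDefForm

open scoped Matrix.Module

/-- The cone of positive definite quadratic forms in the variables `ι`, encoded by their Gram
matrices. -/
abbrev PosDefForm (ι : Type*) : Type _ := {Q : Matrix ι ι ℝ // Q.PosDef}

variable {ι : Type*} [Fintype ι] [DecidableEq ι]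

/-- Change of variables: `g` sends the Gram matrix of a family `e` to that of `g • e`. -/
instance : MulAction (GL ι ℝ) (PosDefForm ι) where
  smul g Q := ⟨g.1 * Q.1 * g.1ᵀ, (IsUnit.posDef_star_right_conjugate_iff g.isUnit).2 Q.2⟩
  one_smul Q := Subtype.ext <| by
    change (1 : Matrix ι ι ℝ) * Q.1 * 1ᵀ = Q.1
    simp
  mul_smul g h Q := Subtype.ext <| by
    change g.1 * h.1 * Q.1 * (g.1 * h.1)ᵀ = g.1 * (h.1 * Q.1 * h.1ᵀ) * g.1ᵀ
    simp only [transpose_mul, Matrix.mul_assoc]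

/-- The restriction of the action of `GL ι ℝ`. -/
instance : MulAction (GL ι ℤ) (PosDefForm ι) :=
  .compHom _ (GeneralLinearGroup.map (n := ι) (Int.castRingHom ℝ))

theorem PosDefForm.coe_smul (g : GL ι ℝ) (Q : PosDefForm ι) :
    (g • Q : PosDefForm ι).1 = g.1 * Q.1 * g.1ᵀ := rfl

theorem PosDefForm.int_smul_def (g : GL ι ℤ) (Q : PosDefForm ι) :
    g • Q = GeneralLinearGroup.map (Int.castRingHom ℝ) g • Q := rfl

instance : ContinuousConstSMul (GL ι ℝ) (PosDefForm ι) where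
  continuous_const_smul _ :=
    ((continuous_const.mul continuous_subtype_val).mul continuous_const).subtype_mk _

instance : ContinuousConstSMul (GL ι ℤ) (PosDefForm ι) where
  continuous_const_smul g :=
    continuous_const_smul (Γ := GL ι ℝ) (GeneralLinearGroup.map (Int.castRingHom ℝ) g)

theorem exists_posDefForm_fixed {H : Type*} [Group H] [Finite H] (ρ : H →* GL ι ℝ) :
    ∃ Q : PosDefForm ι, ∀ h, ρ h • Q = Q := by
  have := Fintype.ofFinite H
  let Q₀ : PosDefForm ι := ⟨1, .one⟩
  refine ⟨⟨∑ h, (ρ h • Q₀).1, posDef_sum Finset.univ_nonempty fun h _ ↦ (ρ h • Q₀).2⟩,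
    fun k ↦ Subtype.ext ?_⟩
  calc (ρ k).1 * (∑ h, (ρ h • Q₀).1) * (ρ k).1ᵀ
    _ = ∑ h, (ρ (k * h) • Q₀).1 := by
      simp only [Matrix.mul_sum, Matrix.sum_mul, map_mul, mul_smul]
      rfl
    _ = ∑ h, (ρ h • Q₀).1 := Equiv.sum_comp (Equiv.mulLeft k) fun h ↦ (ρ h • Q₀).1

theorem fixedPoints_posDefForm_nonempty (H : Subgroup (GL ι ℤ)) [Finite H] :
    (MulAction.fixedPoints H (PosDefForm ι)).Nonempty :=
  exists_posDefForm_fixed ((GeneralLinearGroup.map (Int.castRingHom ℝ)).comp H.subtype)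

section Gram

open scoped RealInnerProductSpace

variable {E : Type*} [NormedAddCommGroup E] [InnerProductSpace ℝ E]

theorem gram_matrix_smul (A : Matrix ι ι ℝ) (e : ι → E) :
    gram ℝ (A • e) = A * gram ℝ e * Aᵀ := by
  ext i j
  simp only [gram_apply, Module.smul_apply, sum_inner, inner_sum, real_inner_smul_left,
    real_inner_smul_right, mul_apply, transpose_apply, Finset.sum_mul]
  refine Finset.sum_congr rfl fun k _ ↦ Finset.sum_congr rfl fun l _ ↦ ?_
  ring

theorem PosDefForm.coe_int_smul_eq_gram {Q : PosDefForm ι} {e : ι → E} (hQ : Q.1 = gram ℝ e)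
    (g : GL ι ℤ) : (g • Q).1 = gram ℝ (g • e) := by
  have hg : g • e = (GeneralLinearGroup.map (Int.castRingHom ℝ) g).1 • e :=
    funext fun i ↦ Finset.sum_congr rfl fun j _ ↦ (Int.cast_smul_eq_zsmul ℝ (g i j) (e j)).symm
  rw [hg, gram_matrix_smul, int_smul_def, coe_smul, hQ]

open scoped MatrixOrder ComplexOrder in
theorem exists_eq_gram_of_posSemidef {m : Type*} [Fintype m] {Q : Matrix m m ℝ}
    (hQ : Q.PosSemidef) : ∃ e : m → EuclideanSpace ℝ m, Q = gram ℝ e := by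
  classical
  obtain ⟨B, rfl⟩ := CStarAlgebra.nonneg_iff_eq_star_mul_self.1 hQ.nonneg
  refine ⟨fun i ↦ WithLp.toLp 2 (Bᵀ i), ?_⟩
  ext i j
  simp [gram_apply, mul_apply, PiLp.inner_apply, mul_comm]

end Gram

theorem exists_GL_smul_eq_of_span_eq {R M : Type*} [CommRing R] [AddCommGroup M] [Module R M]
    {e f : ι → M} (he : LinearIndependent R e) (hf : LinearIndependent R f)
    (hef : Submodule.span R (Set.range e) = Submodule.span R (Set.range f)) :
    ∃ g : GL ι R, g • e = f := by
  let b := Module.Basis.span he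
  let c := (Module.Basis.span hf).map (LinearEquiv.ofEq _ _ hef.symm)
  have hb (i : ι) : (b i : M) = e i := congrArg _ (Module.Basis.span_apply he i)
  have hc (i : ι) : (c i : M) = f i := by simp [c, Module.Basis.span_apply]
  let g : GL ι R := ⟨(b.toMatrix c)ᵀ, (c.toMatrix b)ᵀ,
    by rw [← transpose_mul, c.toMatrix_mul_toMatrix_flip, transpose_one],
    by rw [← transpose_mul, b.toMatrix_mul_toMatrix_flip, transpose_one]⟩
  refine ⟨g, funext fun i ↦ ?_⟩
  calc ∑ j, b.toMatrix c j i • e j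
    _ = (∑ j, b.toMatrix c j i • b j : Submodule.span R (Set.range e)) := by
      simp only [Submodule.coe_sum, Submodule.coe_smul, hb]
    _ = f i := by rw [b.sum_toMatrix_smul_self c i, hc]

end PosDefForm

section Topology

theorem isOpen_setOf_posDef {X ι : Type*} [TopologicalSpace X] [Finite ι]
    {f : X → Matrix ι ι ℝ} (hf : Continuous f) (hherm : ∀ x, (f x).IsHermitian) :
    IsOpen {x | (f x).PosDef} := by
  have := Fintype.ofFinite ι
  have hsphere (x : X) : (f x).PosDef ↔
      ∀ y ∈ Metric.sphere (0 : ι → ℝ) 1, 0 < y ⬝ᵥ f x *ᵥ y := by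
    refine ⟨fun h y hy ↦ h.dotProduct_mulVec_pos (ne_zero_of_mem_unit_sphere ⟨y, hy⟩),
      fun h ↦ .of_dotProduct_mulVec_pos (hherm x) fun y hy ↦ ?_⟩
    have hy_pos : 0 < ‖y‖ := norm_pos_iff.2 hy
    have hunit := h (‖y‖⁻¹ • y) (by simp [norm_smul, hy_pos.ne'])
    rw [mulVec_smul, dotProduct_smul, smul_dotProduct] at hunit
    exact (smul_pos_iff_of_pos_left (by positivity)).1
      ((smul_pos_iff_of_pos_left (by positivity)).1 hunit)
  simp only [hsphere, isOpen_iff_eventually, Set.mem_ofPred_eq]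
  refine fun x hx ↦ (isCompact_sphere 0 1).eventually_forall_of_forall_eventually fun y hy ↦ ?_
  have hcont : Continuous fun z : X × (ι → ℝ) ↦ z.2 ⬝ᵥ f z.1 *ᵥ z.2 := by fun_prop
  exact continuous_const.continuousAt.eventually_lt hcont.continuousAt (hx y hy)

theorem convex_setOf_posDef (ι : Type*) : Convex ℝ {Q : Matrix ι ι ℝ | Q.PosDef} := by
  rw [convex_iff_forall_pos]
  exact fun P hP Q hQ a b ha hb _ ↦ (hP.smul ha).add (hQ.smul hb)

instance {m n : Type*} : LocallyConvexSpace ℝ (Matrix m n ℝ) :=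
  inferInstanceAs (LocallyConvexSpace ℝ (m → n → ℝ))

instance {ι : Type*} : ContractibleSpace (PosDefForm ι) := by
  classical
  exact (convex_setOf_posDef ι).contractibleSpace ⟨1, .one⟩

instance {ι : Type*} : LocallyPathConnectedSpace (PosDefForm ι) :=
  (convex_setOf_posDef ι).locallyPathConnectedSpace

variable {n : ℕ}

theorem convex_setOf_isReducedForm (K : ℝ) :
    Convex ℝ {Q : Matrix (Fin n) (Fin n) ℝ | IsReducedForm K Q} := by
  rw [convex_iff_forall_pos]
  refine fun P hP Q hQ a b ha hb _ ↦ ⟨?_, fun i j hij ↦ ?_, fun i j hij ↦ ?_⟩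
  · convert (hP.posDef_sub.smul ha).add (hQ.posDef_sub.smul hb) using 1
    ext i j
    obtain rfl | hij := eq_or_ne i j
    · simp only [Matrix.sub_apply, Matrix.add_apply, Matrix.smul_apply, diagonal_apply_eq,
        diag_apply, smul_eq_mul]
      ring
    · simp only [Matrix.sub_apply, Matrix.add_apply, Matrix.smul_apply, diagonal_apply_ne _ hij,
        smul_eq_mul]
      ring
  · have hP' := mul_lt_mul_of_pos_left (hP.diag_lt i j hij) ha
    have hQ' := mul_lt_mul_of_pos_left (hQ.diag_lt i j hij) hb
    simp only [Matrix.add_apply, Matrix.smul_apply, smul_eq_mul]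
    linarith
  · have hP' := mul_lt_mul_of_pos_left (hP.abs_lt i j hij) ha
    have hQ' := mul_lt_mul_of_pos_left (hQ.abs_lt i j hij) hb
    have hadd := abs_add_le (a * P i j) (b * Q i j)
    rw [abs_mul, abs_mul, abs_of_pos ha, abs_of_pos hb] at hadd
    simp only [Matrix.add_apply, Matrix.smul_apply, smul_eq_mul]
    linarith

variable (n) in
/-- The positive definite forms that are `K`-reduced: the open region to whose translates Macbeath's
theorem is applied. -/
def reducedRegion (K : ℝ) : Set (PosDefForm (Fin n)) := {Q | IsReducedForm K Q.1}

theorem isOpen_reducedRegion (K : ℝ) : IsOpen (reducedRegion n K) := by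
  have hset : reducedRegion n K = {Q | (K • Q.1 - diagonal Q.1.diag).PosDef} ∩
      ({Q | ∀ i j, i < j → Q.1 i i < K * Q.1 j j} ∩
        {Q | ∀ i j, i < j → |Q.1 i j| < K * Q.1 i i}) :=
    Set.ext fun Q ↦ ⟨fun h ↦ ⟨h.1, h.2, h.3⟩, fun h ↦ ⟨h.1, h.2.1, h.2.2⟩⟩
  have hentry (i j : Fin n) : Continuous fun Q : PosDefForm (Fin n) ↦ Q.1 i j :=
    continuous_subtype_val.matrix_elem i j
  have hmul (i : Fin n) : Continuous fun Q : PosDefForm (Fin n) ↦ K * Q.1 i i :=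
    continuous_const.mul (hentry i i)
  simp only [hset, Set.ofPred_forall]
  refine (isOpen_setOf_posDef ?_ fun Q ↦ ?_).inter (.inter ?_ ?_)
  · exact (continuous_subtype_val.const_smul K).sub
      continuous_subtype_val.matrix_diag.matrix_diagonal
  · exact (Q.2.isHermitian.smul (.all _)).sub (isHermitian_diagonal _)
  · exact isOpen_iInter_of_finite fun i ↦ isOpen_iInter_of_finite fun j ↦
      isOpen_iInter_of_finite fun _ ↦ isOpen_lt (hentry i i) (hmul j)
  · exact isOpen_iInter_of_finite fun i ↦ isOpen_iInter_of_finite fun j ↦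
      isOpen_iInter_of_finite fun _ ↦ isOpen_lt (hentry i j).abs (hmul i)

theorem isPreconnected_reducedRegion (K : ℝ) : IsPreconnected (reducedRegion n K) := by
  have himage : Subtype.val '' reducedRegion n K = {Q | IsReducedForm K Q} ∩ {Q | Q.PosDef} :=
    Set.ext fun Q ↦
      ⟨fun ⟨P, hP, hPQ⟩ ↦ hPQ ▸ ⟨hP, P.2⟩, fun ⟨hQ, hpos⟩ ↦ ⟨⟨Q, hpos⟩, hQ, rfl⟩⟩
  refine Topology.IsInducing.subtypeVal.isPreconnected_image.1 ?_
  exact himage ▸ ((convex_setOf_isReducedForm K).inter (convex_setOf_posDef _)).isPreconnected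

end Topology

section FundamentalRegion

open scoped Matrix.Module Nat Pointwise RealInnerProductSpace

variable {E : Type*} [NormedAddCommGroup E] [InnerProductSpace ℝ E] {n : ℕ}

theorem IsReducedForm.linearIndependent {K : ℝ} {e : Fin n → E}
    (he : IsReducedForm K (gram ℝ e)) : LinearIndependent ℝ e := by
  rw [Fintype.linearIndependent_iff]
  intro y hy
  by_contra! h
  obtain ⟨i, hi⟩ := h
  have hlt := (isReducedForm_gram_iff.1 he).1 y fun h ↦ hi (congrFun h i)
  rw [hy, norm_zero, zero_pow two_ne_zero, mul_zero] at hlt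
  exact hlt.not_ge (by positivity)

theorem exists_GL_smul_isReducedForm (b : Module.Basis (Fin n) ℝ E) :
    ∃ g : GL (Fin n) ℤ, IsReducedForm ((n + 3)! : ℝ) (gram ℝ (g • ⇑b)) := by
  have : FiniteDimensional ℝ E := b.finiteDimensional_of_finite
  have : ProperSpace E := FiniteDimensional.proper ℝ E
  have hb : LinearIndependent ℤ b := b.linearIndependent.restrict_scalars' ℤ
  have hrank : Module.finrank ℤ (Submodule.span ℤ (Set.range b)) = n :=
    (finrank_span_eq_card hb).trans (Fintype.card_fin n)
  have hfin (R : ℝ) : {x ∈ Submodule.span ℤ (Set.range b) | ‖x‖ ≤ R}.Finite :=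
    (ZSpan.setFinite_inter b (Metric.isBounded_closedBall (x := 0) (r := R))).subset
      fun x ⟨hx, hxR⟩ ↦ ⟨mem_closedBall_zero_iff.2 hxR, hx⟩
  have : Module.Finite ℤ (Submodule.span ℤ (Set.range b)) :=
    .span_of_finite ℤ (Set.finite_range b)
  obtain ⟨f, hspan, hf⟩ := exists_isReducedForm_gram_span_eq n _ hrank hfin
  obtain ⟨g, rfl⟩ :=
    exists_GL_smul_eq_of_span_eq hb (hf.linearIndependent.restrict_scalars' ℤ) hspan.symm
  exact ⟨g, hf⟩

theorem iUnion_smul_reducedRegion :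
    ⋃ g : GL (Fin n) ℤ, g • reducedRegion n ((n + 3)! : ℝ) = Set.univ := by
  refine Set.iUnion_eq_univ_iff.2 fun Q ↦ ?_
  obtain ⟨e, he⟩ := exists_eq_gram_of_posSemidef Q.2.posSemidef
  have hli : LinearIndependent ℝ e := linearIndependent_of_posDef_gram (he ▸ Q.2)
  have hspan : Submodule.span ℝ (Set.range e) = ⊤ :=
    hli.span_eq_top_of_card_eq_finrank' (by simp)
  obtain ⟨g, hg⟩ := exists_GL_smul_isReducedForm (Module.Basis.mk hli hspan.ge)
  refine ⟨g⁻¹, Set.mem_inv_smul_set_iff.2 ?_⟩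
  rw [Module.Basis.coe_mk, ← PosDefForm.coe_int_smul_eq_gram he] at hg
  exact hg

theorem exists_abs_le_of_isReducedForm_smul (n : ℕ) (K : ℝ) :
    ∃ B : ℝ, ∀ (e : Fin n → E) (g : GL (Fin n) ℤ), IsReducedForm K (gram ℝ e) →
      IsReducedForm K (gram ℝ (g • e)) → ∀ i j, |(g i j : ℝ)| ≤ B := by
  obtain ⟨B, hB⟩ := exists_abs_coord_le_of_isReducedForm (E := E) n K (K ^ 2)
  refine ⟨B, fun e g he hge i ↦ hB e _ he fun l ↦ ?_⟩
  have hcast (h : GL (Fin n) ℤ) (v : Fin n → E) (i : Fin n) :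
      ∑ k, (h i k : ℝ) • v k = (h • v) i :=
    Finset.sum_congr rfl fun k _ ↦ Int.cast_smul_eq_zsmul ℝ (h i k) (v k)
  have hinner := hge.abs_inner_sum_intCast_le (g⁻¹ l) i
  rwa [hcast, inv_smul_smul, real_inner_comm, ← hcast] at hinner

theorem finite_returnSet_reducedRegion (K : ℝ) :
    (returnSet (GL (Fin n) ℤ) (reducedRegion n K)).Finite := by
  obtain ⟨B, hB⟩ := exists_abs_le_of_isReducedForm_smul (E := EuclideanSpace ℝ (Fin n)) n K
  refine ((finite_intMatrix_abs_le B).preimage Units.val_injective.injOn).subset ?_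
  rintro g ⟨_, hgQ, Q, hQ, rfl⟩
  obtain ⟨e, he⟩ := exists_eq_gram_of_posSemidef Q.2.posSemidef
  exact hB e g (he ▸ hQ) (PosDefForm.coe_int_smul_eq_gram he g ▸ hgQ)

end FundamentalRegion

/-- The group `GL_n(ℤ)` of invertible `n × n` integer matrices is
finitely presented and contains only finitely many finite subgroups up to conjugacy. -/
theorem GLnZ_finitely_presented_and_finitely_many_finite_subgroups (n : ℕ) :
    (∃ (m : ℕ) (rels : Set (FreeGroup (Fin m))), rels.Finite ∧
        Nonempty (PresentedGroup rels ≃* GL (Fin n) ℤ)) ∧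
    Finite (Quot (fun (H K : {H : Subgroup (GL (Fin n) ℤ) // Finite H}) =>
      ∃ g : GL (Fin n) ℤ, Subgroup.map (MulAut.conj g).toMonoidHom H.1 = K.1)) := by
  constructor
  · have : Group.IsFinitelyPresented (GL (Fin n) ℤ) :=
      isFinitelyPresented_of_finite_returnSet (isOpen_reducedRegion _)
        (isPreconnected_reducedRegion _) iUnion_smul_reducedRegion
        (finite_returnSet_reducedRegion _)
    obtain ⟨m, rels, hfin, ⟨e⟩⟩ :=
      Group.IsFinitelyPresented.exists_mulEquiv_presentedGroup (G := GL (Fin n) ℤ)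
    exact ⟨m, rels, hfin, ⟨e.symm⟩⟩
  · exact finite_quot_conj_of_finite_returnSet iUnion_smul_reducedRegion
      (finite_returnSet_reducedRegion _) fun H _ ↦ fixedPoints_posDefForm_nonempty H
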